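/- Let i denote the imaginary unit and define A = [[1,1],[−1/2,1/2]], B = [[0,1],[−1,0]], C = [[1,1],[−1/2,1/2]], D = [[0,1/2],[−2,0]], E = [[−2,2i],[i/4,−1/4]], F = [[(−1+i)/2,−1/2],[1−i,−i]], G = [[−i/2,−1/2],[1,i]], H = [[1,−i],[−i/2,1/2]], I = [[i,0],[0,−i]], J = [[1,−1],[1/2,1/2]]. Then the following four identities hold: (i) for the gate CNOT12 = |0000⟩+|1010⟩+|1101⟩+|0111⟩, (A⊗B⊗C⊗D)CNOT12 = |0000⟩ − (1/4)|1010⟩ + 4|0101⟩ + |1111⟩; (ii) for the gate CNOT1 = |0000⟩+|0110⟩+|1011⟩+|1101⟩, (G⊗H⊗I⊗J)CNOT1 = |0000⟩ + |1100⟩ − 2|1010⟩ + i|1001⟩ − (1/2)|0110⟩ − (i/4)|0101⟩ + (i/2)|0011⟩ − (i/2)|1111⟩; (iii) the change of basis of the bridge cogate ⟨100|+⟨010|+⟨001|+⟨111| under (D,E,G) (cogate rule, i.e. transform by D⁻¹,E⁻¹,G⁻¹) equals −(1/4)⟨100| + 8⟨010| − (1/2)⟨001| + ⟨111|; (iv)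 the change of basis of the bridge cogate ⟨000|+⟨010|+⟨101| under (C,F,H) equals ⟨100| + (i/4)⟨010| − i⟨001| + ⟨111|. Consequently all four tensors are simultaneously Pfaffian. -/

import Mathlib

/-!
A change of basis is linear and sends `ket v` to the product vector
`b ↦ ∏ i, A i (b i) (v i)` (`cobGate_ket`, and `cobCogate_ket` for cogates). The four tensors are
sums of at most four kets, so each coordinate of the transformed tensor is a sum of at most four
products of matrix entries; for cogates the inverses are explicit, all determinants being `1`.

The sub-Pfaffian vectors are written out coordinatewise in arity `4` and, dually, in arity `3`
(`sPf_four`, `sPfStar_three`). In arity `3` every odd-weight vector with coordinate `1` at `111`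
is an `sPf*`, and in arity `4` the only condition is the Pfaffian relation
`ξ₁₂ξ₃₄ - ξ₁₃ξ₂₄ + ξ₁₄ξ₂₃` for the coordinate at `1111`, which holds for the two transformed gates.
-/

open scoped BigOperators

noncomputable section

/-- Change of basis on an `n`-arity gate: `((A₁⊗…⊗Aₙ)G)(b) = Σ_c (∏ᵢ Aᵢ(bᵢ,cᵢ))·G(c)`. -/
def cobGate {n : ℕ} (A : Fin n → Matrix (Fin 2) (Fin 2) ℂ) (G : (Fin n → Fin 2) → ℂ) :
    (Fin n → Fin 2) → ℂ :=
  fun b => ∑ c : Fin n → Fin 2, (∏ i, A i (b i) (c i)) * G c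

/-- Change of basis on an `n`-arity cogate: `C′(b) = Σ_c C(c)·∏ᵢ Aᵢ⁻¹(cᵢ,bᵢ)`. -/
def cobCogate {n : ℕ} (A : Fin n → Matrix (Fin 2) (Fin 2) ℂ) (C : (Fin n → Fin 2) → ℂ) :
    (Fin n → Fin 2) → ℂ :=
  fun b => ∑ c : Fin n → Fin 2, C c * ∏ i, (A i)⁻¹ (c i) (b i)

/-- The standard basis vector (ket/bra) at the bitstring `v`. -/
def ket {n : ℕ} (v : Fin n → Fin 2) : (Fin n → Fin 2) → ℂ :=
  fun b => if b = v then 1 else 0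

/-- The support of a bitstring. -/
def supp {n : ℕ} (b : Fin n → Fin 2) : Finset (Fin n) :=
  Finset.univ.filter fun i => b i = 1

/-- Fuel-driven Laplace expansion of the Pfaffian of a principal submatrix. -/
def subPfAux {n : ℕ} (Ξ : Matrix (Fin n) (Fin n) ℂ) : ℕ → Finset (Fin n) → ℂ
  | 0, I => if I = ∅ then 1 else 0
  | fuel + 1, I =>
    if hI : I.Nonempty then
      if Odd I.card then 0
      else
        ∑ i ∈ I.erase (I.min' hI),
          (-1 : ℂ) ^ (I.filter fun j => j ≤ i).card * Ξ (I.min' hI) i *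
            subPfAux Ξ fuel ((I.erase (I.min' hI)).erase i)
    else 1

/-- `subPf Ξ I` is the Pfaffian `Pf(Ξ|_I)` of the principal submatrix of `Ξ` on the
rows and columns in `I` (`1` on the empty set, `0` for odd `|I|`). -/
def subPf {n : ℕ} (Ξ : Matrix (Fin n) (Fin n) ℂ) (I : Finset (Fin n)) : ℂ :=
  subPfAux Ξ I.card I

/-- The sub-Pfaffian vector: coordinate `Pf(Ξ|_I)` at the bitstring with support `I`. -/
def sPf {n : ℕ} (Ξ : Matrix (Fin n) (Fin n) ℂ) : (Fin n → Fin 2) → ℂ :=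
  fun b => subPf Ξ (supp b)

/-- The dual sub-Pfaffian vector: coordinate `Pf(Θ|_{Jᶜ})` at the bitstring with support `J`. -/
def sPfStar {n : ℕ} (Θ : Matrix (Fin n) (Fin n) ℂ) : (Fin n → Fin 2) → ℂ :=
  fun b => subPf Θ (supp b)ᶜ

/-- A matrix is skew-symmetric. -/
def IsSkew {n : ℕ} (Ξ : Matrix (Fin n) (Fin n) ℂ) : Prop :=
  ∀ i j, Ξ j i = -Ξ i j

/-- A gate is Pfaffian under the change of basis `M`. -/
def IsPfaffGate {n : ℕ} (M : Fin n → Matrix (Fin 2) (Fin 2) ℂ) (G : (Fin n → Fin 2) → ℂ) : Prop :=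
  ∃ (α : ℂ) (Ξ : Matrix (Fin n) (Fin n) ℂ), IsSkew Ξ ∧ cobGate M G = fun b => α * sPf Ξ b

/-- A cogate is Pfaffian under the change of basis `M`. -/
def IsPfaffCogate {n : ℕ} (M : Fin n → Matrix (Fin 2) (Fin 2) ℂ) (C : (Fin n → Fin 2) → ℂ) : Prop :=
  ∃ (β : ℂ) (Θ : Matrix (Fin n) (Fin n) ℂ), IsSkew Θ ∧ cobCogate M C = fun b => β * sPfStar Θ b

/-- The 4-arity CNOT12 gate (the partial chain CNOT1–CNOT2). -/
def cnot12 : (Fin 4 → Fin 2) → ℂ :=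
  ket ![0, 0, 0, 0] + ket ![1, 0, 1, 0] + ket ![1, 1, 0, 1] + ket ![0, 1, 1, 1]

/-- The 4-arity CNOT1 gate. -/
def cnot1 : (Fin 4 → Fin 2) → ℂ :=
  ket ![0, 0, 0, 0] + ket ![0, 1, 1, 0] + ket ![1, 0, 1, 1] + ket ![1, 1, 0, 1]

/-- The bridge cogate `⟨100|+⟨010|+⟨001|+⟨111|`. -/
def bridgeT : (Fin 3 → Fin 2) → ℂ :=
  ket ![1, 0, 0] + ket ![0, 1, 0] + ket ![0, 0, 1] + ket ![1, 1, 1]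

/-- The bridge cogate `⟨000|+⟨010|+⟨101|`. -/
def bridgeB : (Fin 3 → Fin 2) → ℂ :=
  ket ![0, 0, 0] + ket ![0, 1, 0] + ket ![1, 0, 1]

def mA : Matrix (Fin 2) (Fin 2) ℂ := !![1, 1; -(1/2), 1/2]
def mB : Matrix (Fin 2) (Fin 2) ℂ := !![0, 1; -1, 0]
def mC : Matrix (Fin 2) (Fin 2) ℂ := !![1, 1; -(1/2), 1/2]
def mD : Matrix (Fin 2) (Fin 2) ℂ := !![0, 1/2; -2, 0]
def mE : Matrix (Fin 2) (Fin 2) ℂ := !![-2, 2*Complex.I; Complex.I/4, -(1/4)]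
def mF : Matrix (Fin 2) (Fin 2) ℂ := !![(-1+Complex.I)/2, -(1/2); 1-Complex.I, -Complex.I]
def mG : Matrix (Fin 2) (Fin 2) ℂ := !![-Complex.I/2, -(1/2); 1, Complex.I]
def mH : Matrix (Fin 2) (Fin 2) ℂ := !![1, -Complex.I; -Complex.I/2, 1/2]
def mI : Matrix (Fin 2) (Fin 2) ℂ := !![Complex.I, 0; 0, -Complex.I]
def mJ : Matrix (Fin 2) (Fin 2) ℂ := !![1, -1; 1/2, 1/2]

theorem cobGate_add {n : ℕ} (A : Fin n → Matrix (Fin 2) (Fin 2) ℂ) (G H : (Fin n → Fin 2) → ℂ) :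
    cobGate A (G + H) = cobGate A G + cobGate A H := by
  funext b
  simp [cobGate, mul_add, Finset.sum_add_distrib]

theorem cobGate_ket {n : ℕ} (A : Fin n → Matrix (Fin 2) (Fin 2) ℂ) (v : Fin n → Fin 2) :
    cobGate A (ket v) = fun b => ∏ i, A i (b i) (v i) := by
  funext b
  simp [cobGate, ket]

theorem cobCogate_add {n : ℕ} (A : Fin n → Matrix (Fin 2) (Fin 2) ℂ)
    (C D : (Fin n → Fin 2) → ℂ) :
    cobCogate A (C + D) = cobCogate A C + cobCogate A D := by
  funext b
  simp [cobCogate, add_mul, Finset.sum_add_distrib]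

theorem cobCogate_ket {n : ℕ} (A : Fin n → Matrix (Fin 2) (Fin 2) ℂ) (v : Fin n → Fin 2) :
    cobCogate A (ket v) = fun b => ∏ i, (A i)⁻¹ (v i) (b i) := by
  funext b
  simp [cobCogate, ket]

theorem inv_of_det_one {a b c d : ℂ} (h : a * d - b * c = 1) :
    (!![a, b; c, d] : Matrix (Fin 2) (Fin 2) ℂ)⁻¹ = !![d, -b; -c, a] := by
  rw [Matrix.inv_def, Matrix.det_fin_two_of, h, Matrix.adjugate_fin_two_of]
  simp

theorem mC_inv : mC⁻¹ = !![1/2, -1; 1/2, 1] := by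
  rw [mC, inv_of_det_one (by norm_num)]
  simp

theorem mD_inv : mD⁻¹ = !![0, -(1/2); 2, 0] := by
  rw [mD, inv_of_det_one (by norm_num)]
  simp

theorem mE_inv : mE⁻¹ = !![-(1/4), -(2*Complex.I); -(Complex.I/4), -2] := by
  rw [mE, inv_of_det_one (by linear_combination (-1/2) * Complex.I_mul_I)]

theorem mF_inv : mF⁻¹ = !![-Complex.I, 1/2; -(1-Complex.I), (-1+Complex.I)/2] := by
  rw [mF, inv_of_det_one (by linear_combination (-1/2) * Complex.I_mul_I)]
  simp

theorem mG_inv : mG⁻¹ = !![Complex.I, 1/2; -1, -Complex.I/2] := by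
  rw [mG, inv_of_det_one (by linear_combination (-1/2) * Complex.I_mul_I)]
  simp

theorem mH_inv : mH⁻¹ = !![1/2, Complex.I; Complex.I/2, 1] := by
  rw [mH, inv_of_det_one (by linear_combination (-1/2) * Complex.I_mul_I)]
  simp [neg_div]

theorem subPf_empty {n : ℕ} (Ξ : Matrix (Fin n) (Fin n) ℂ) : subPf Ξ ∅ = 1 := by
  simp [subPf, subPfAux]

theorem subPf_odd {n : ℕ} (Ξ : Matrix (Fin n) (Fin n) ℂ) {I : Finset (Fin n)}
    (hI : Odd I.card) : subPf Ξ I = 0 := by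
  have hne : I.Nonempty := Finset.card_pos.mp hI.pos
  obtain ⟨k, hk⟩ := Nat.exists_eq_succ_of_ne_zero hI.pos.ne'
  rw [subPf, hk, subPfAux, dif_pos hne, if_pos hI]

/-- Fuel beyond the cardinality of the index set does not change the expansion. -/
theorem subPfAux_succ {n : ℕ} (Ξ : Matrix (Fin n) (Fin n) ℂ) (k : ℕ) (I : Finset (Fin n))
    (hI : I.card ≤ k) : subPfAux Ξ (k + 1) I = subPfAux Ξ k I := by
  induction k generalizing I with
  | zero =>
    obtain rfl := Finset.card_eq_zero.mp (Nat.le_zero.mp hI)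
    simp [subPfAux]
  | succ k ih =>
    rw [subPfAux, subPfAux]
    split_ifs with hne hodd
    · rfl
    · refine Finset.sum_congr rfl fun i hi => ?_
      rw [ih]
      have h₁ := Finset.card_erase_of_mem hi
      have h₂ := Finset.card_erase_of_mem (I.min'_mem hne)
      omega
    · rfl

/-- One Laplace step along the smallest index `m` of a nonempty even set `I`. -/
theorem subPf_expand {n : ℕ} (Ξ : Matrix (Fin n) (Fin n) ℂ) (I : Finset (Fin n)) (m : Fin n)
    (hm : m ∈ I) (hmin : ∀ i ∈ I, m ≤ i) (hI : Even I.card) :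
    subPf Ξ I = ∑ i ∈ I.erase m,
      (-1 : ℂ) ^ (I.filter fun j => j ≤ i).card * Ξ m i * subPf Ξ ((I.erase m).erase i) := by
  have hne : I.Nonempty := ⟨m, hm⟩
  have hmin' : I.min' hne = m :=
    le_antisymm (I.min'_le m hm) (hmin _ (I.min'_mem hne))
  have hpos := Finset.card_pos.mpr hne
  obtain ⟨k, hk⟩ : ∃ k, I.card = k + 2 := by
    obtain ⟨r, hr⟩ := hI
    exact ⟨I.card - 2, by omega⟩
  rw [subPf, hk, subPfAux, dif_pos hne, if_neg (Nat.not_odd_iff_even.mpr hI), hmin']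
  refine Finset.sum_congr rfl fun i hi => ?_
  -- Two elements are removed but only one unit of fuel is spent; the surplus is harmless.
  have hcard : ((I.erase m).erase i).card = k := by
    rw [Finset.card_erase_of_mem hi, Finset.card_erase_of_mem hm]; omega
  rw [subPf, hcard, subPfAux_succ Ξ k _ hcard.le]

theorem subPf_pair {n : ℕ} (Ξ : Matrix (Fin n) (Fin n) ℂ) {i j : Fin n} (h : i < j) :
    subPf Ξ {i, j} = Ξ i j := by
  have he : ({i, j} : Finset (Fin n)).erase i = {j} := by
    rw [Finset.erase_insert (by simpa using h.ne)]
  have hf : ({i, j} : Finset (Fin n)).filter (fun l => l ≤ j) = {i, j} :=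
    Finset.filter_true_of_mem (by simp [h.le])
  rw [subPf_expand Ξ {i, j} i (by simp) (by simp [h.le]) (by simp [Finset.card_pair h.ne]), he]
  simp [hf, Finset.card_pair h.ne, subPf_empty]

theorem subPf_univ_four (Ξ : Matrix (Fin 4) (Fin 4) ℂ) :
    subPf Ξ Finset.univ = Ξ 0 1 * Ξ 2 3 - Ξ 0 2 * Ξ 1 3 + Ξ 0 3 * Ξ 1 2 := by
  rw [subPf_expand Ξ Finset.univ 0 (by simp) (by simp) (by decide)]
  have he : (Finset.univ : Finset (Fin 4)).erase 0 = {1, 2, 3} := by decide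
  have e1 : ({1, 2, 3} : Finset (Fin 4)).erase 1 = {2, 3} := by decide
  have e2 : ({1, 2, 3} : Finset (Fin 4)).erase 2 = {1, 3} := by decide
  have e3 : ({1, 2, 3} : Finset (Fin 4)).erase 3 = {1, 2} := by decide
  have c1 : ((Finset.univ : Finset (Fin 4)).filter fun j => j ≤ 1).card = 2 := by decide
  have c2 : ((Finset.univ : Finset (Fin 4)).filter fun j => j ≤ 2).card = 3 := by decide
  have c3 : ((Finset.univ : Finset (Fin 4)).filter fun j => j ≤ 3).card = 4 := by decide
  rw [he, Finset.sum_insert (by decide), Finset.sum_insert (by decide), Finset.sum_singleton,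
    e1, e2, e3, c1, c2, c3, subPf_pair Ξ (by decide), subPf_pair Ξ (by decide),
    subPf_pair Ξ (by decide)]
  ring

/-- The sub-Pfaffian vector in arity `4`. -/
theorem sPf_four (Ξ : Matrix (Fin 4) (Fin 4) ℂ) :
    sPf Ξ = fun b => ket ![0,0,0,0] b + Ξ 0 1 * ket ![1,1,0,0] b + Ξ 0 2 * ket ![1,0,1,0] b
      + Ξ 0 3 * ket ![1,0,0,1] b + Ξ 1 2 * ket ![0,1,1,0] b + Ξ 1 3 * ket ![0,1,0,1] b
      + Ξ 2 3 * ket ![0,0,1,1] b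
      + (Ξ 0 1 * Ξ 2 3 - Ξ 0 2 * Ξ 1 3 + Ξ 0 3 * Ξ 1 2) * ket ![1,1,1,1] b := by
  funext b
  have hpair : ∀ (v : Fin 4 → Fin 2) (i j : Fin 4), i < j → supp v = {i, j} → sPf Ξ v = Ξ i j :=
    fun v i j hij hv => by rw [sPf, hv, subPf_pair Ξ hij]
  have hcases : ∀ b : Fin 4 → Fin 2, Odd (supp b).card ∨ b = ![0,0,0,0] ∨ b = ![1,1,0,0] ∨
      b = ![1,0,1,0] ∨ b = ![1,0,0,1] ∨ b = ![0,1,1,0] ∨ b = ![0,1,0,1] ∨ b = ![0,0,1,1] ∨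
      b = ![1,1,1,1] := by decide
  rcases hcases b with hodd | rfl | rfl | rfl | rfl | rfl | rfl | rfl | rfl
  · have hne : ∀ v : Fin 4 → Fin 2, ¬ Odd (supp v).card → ket v b = 0 := by
      intro v hv
      refine if_neg ?_
      rintro rfl
      exact hv hodd
    rw [sPf, subPf_odd Ξ hodd, hne ![0,0,0,0] (by decide), hne ![1,1,0,0] (by decide),
      hne ![1,0,1,0] (by decide), hne ![1,0,0,1] (by decide), hne ![0,1,1,0] (by decide),
      hne ![0,1,0,1] (by decide), hne ![0,0,1,1] (by decide), hne ![1,1,1,1] (by decide)]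
    ring
  · rw [sPf, show supp ![0,0,0,0] = (∅ : Finset (Fin 4)) by decide, subPf_empty]
    simp [ket]
  · rw [hpair _ 0 1 (by decide) (by decide)]
    simp [ket]
  · rw [hpair _ 0 2 (by decide) (by decide)]
    simp [ket]
  · rw [hpair _ 0 3 (by decide) (by decide)]
    simp [ket]
  · rw [hpair _ 1 2 (by decide) (by decide)]
    simp [ket]
  · rw [hpair _ 1 3 (by decide) (by decide)]
    simp [ket]
  · rw [hpair _ 2 3 (by decide) (by decide)]
    simp [ket]
  · rw [sPf, show supp ![1,1,1,1] = (Finset.univ : Finset (Fin 4)) by decide, subPf_univ_four]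
    simp [ket]

/-- The dual sub-Pfaffian vector in arity `3`, where only odd-weight bitstrings have an even
complement. -/
theorem sPfStar_three (Θ : Matrix (Fin 3) (Fin 3) ℂ) :
    sPfStar Θ = fun b => Θ 1 2 * ket ![1,0,0] b + Θ 0 2 * ket ![0,1,0] b
      + Θ 0 1 * ket ![0,0,1] b + ket ![1,1,1] b := by
  funext b
  have hpair : ∀ (v : Fin 3 → Fin 2) (i j : Fin 3), i < j → (supp v)ᶜ = {i, j} →
      sPfStar Θ v = Θ i j :=
    fun v i j hij hv => by rw [sPfStar, hv, subPf_pair Θ hij]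
  have hcases : ∀ b : Fin 3 → Fin 2, Odd (supp b)ᶜ.card ∨ b = ![1,0,0] ∨ b = ![0,1,0] ∨
      b = ![0,0,1] ∨ b = ![1,1,1] := by decide
  rcases hcases b with hodd | rfl | rfl | rfl | rfl
  · have hne : ∀ v : Fin 3 → Fin 2, ¬ Odd (supp v)ᶜ.card → ket v b = 0 := by
      intro v hv
      refine if_neg ?_
      rintro rfl
      exact hv hodd
    rw [sPfStar, subPf_odd Θ hodd, hne ![1,0,0] (by decide), hne ![0,1,0] (by decide),
      hne ![0,0,1] (by decide), hne ![1,1,1] (by decide)]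
    ring
  · rw [hpair _ 1 2 (by decide) (by decide)]
    simp [ket]
  · rw [hpair _ 0 2 (by decide) (by decide)]
    simp [ket]
  · rw [hpair _ 0 1 (by decide) (by decide)]
    simp [ket]
  · rw [sPfStar, show (supp ![1,1,1])ᶜ = (∅ : Finset (Fin 3)) by decide, subPf_empty]
    simp [ket]

theorem forall_bits_four {P : (Fin 4 → Fin 2) → Prop}
    (h : ∀ x y z w, P ![x, y, z, w]) (b : Fin 4 → Fin 2) : P b := by
  have hb : b = ![b 0, b 1, b 2, b 3] := by
    funext i; fin_cases i <;> rfl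
  rw [hb]
  exact h _ _ _ _

theorem forall_bits_three {P : (Fin 3 → Fin 2) → Prop}
    (h : ∀ x y z, P ![x, y, z]) (b : Fin 3 → Fin 2) : P b := by
  have hb : b = ![b 0, b 1, b 2] := by
    funext i; fin_cases i <;> rfl
  rw [hb]
  exact h _ _ _

theorem cob_cnot12 : cobGate ![mA, mB, mC, mD] cnot12 =
      fun b => ket ![0,0,0,0] b - (1/4 : ℂ) * ket ![1,0,1,0] b
        + 4 * ket ![0,1,0,1] b + ket ![1,1,1,1] b := by
  rw [cnot12, cobGate_add, cobGate_add, cobGate_add, cobGate_ket, cobGate_ket, cobGate_ket,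
    cobGate_ket]
  funext b
  revert b
  refine forall_bits_four fun x y z w => ?_
  fin_cases x <;> fin_cases y <;> fin_cases z <;> fin_cases w <;>
    simp [Fin.prod_univ_four, mA, mB, mC, mD, ket] <;> norm_num

theorem cob_cnot1 : cobGate ![mG, mH, mI, mJ] cnot1 =
      fun b => ket ![0,0,0,0] b + ket ![1,1,0,0] b - 2 * ket ![1,0,1,0] b
        + Complex.I * ket ![1,0,0,1] b - (1/2 : ℂ) * ket ![0,1,1,0] b
        - (Complex.I/4) * ket ![0,1,0,1] b + (Complex.I/2) * ket ![0,0,1,1] b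
        - (Complex.I/2) * ket ![1,1,1,1] b := by
  rw [cnot1, cobGate_add, cobGate_add, cobGate_add, cobGate_ket, cobGate_ket, cobGate_ket,
    cobGate_ket]
  funext b
  revert b
  refine forall_bits_four fun x y z w => ?_
  fin_cases x <;> fin_cases y <;> fin_cases z <;> fin_cases w <;>
    simp [Fin.prod_univ_four, mG, mH, mI, mJ, ket] <;> grind [Complex.I_mul_I]

theorem cob_bridgeT : cobCogate ![mD, mE, mG] bridgeT =
      fun b => -(1/4 : ℂ) * ket ![1,0,0] b + 8 * ket ![0,1,0] b
        - (1/2 : ℂ) * ket ![0,0,1] b + ket ![1,1,1] b := by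
  rw [bridgeT, cobCogate_add, cobCogate_add, cobCogate_add, cobCogate_ket, cobCogate_ket,
    cobCogate_ket, cobCogate_ket]
  funext b
  revert b
  refine forall_bits_three fun x y z => ?_
  fin_cases x <;> fin_cases y <;> fin_cases z <;>
    simp [Fin.prod_univ_three, mD_inv, mE_inv, mG_inv, ket] <;> grind [Complex.I_mul_I]

theorem cob_bridgeB : cobCogate ![mC, mF, mH] bridgeB =
      fun b => ket ![1,0,0] b + (Complex.I/4) * ket ![0,1,0] b
        - Complex.I * ket ![0,0,1] b + ket ![1,1,1] b := by
  rw [bridgeB, cobCogate_add, cobCogate_add, cobCogate_ket, cobCogate_ket, cobCogate_ket]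
  funext b
  revert b
  refine forall_bits_three fun x y z => ?_
  fin_cases x <;> fin_cases y <;> fin_cases z <;>
    simp [Fin.prod_univ_three, mC_inv, mF_inv, mH_inv, ket] <;> grind [Complex.I_mul_I]

/-- Theorem 5.7: a Pfaffian partial SWAP, CNOT12–CNOT1 linked by bridge
cogates, with its four Pfaffian certificates. -/
theorem stmt17 :
    -- (i)
    (cobGate ![mA, mB, mC, mD] cnot12 =
      fun b => ket ![0,0,0,0] b - (1/4 : ℂ) * ket ![1,0,1,0] b
        + 4 * ket ![0,1,0,1] b + ket ![1,1,1,1] b) ∧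
    -- (ii)
    (cobGate ![mG, mH, mI, mJ] cnot1 =
      fun b => ket ![0,0,0,0] b + ket ![1,1,0,0] b - 2 * ket ![1,0,1,0] b
        + Complex.I * ket ![1,0,0,1] b - (1/2 : ℂ) * ket ![0,1,1,0] b
        - (Complex.I/4) * ket ![0,1,0,1] b + (Complex.I/2) * ket ![0,0,1,1] b
        - (Complex.I/2) * ket ![1,1,1,1] b) ∧
    -- (iii)
    (cobCogate ![mD, mE, mG] bridgeT =
      fun b => -(1/4 : ℂ) * ket ![1,0,0] b + 8 * ket ![0,1,0] b
        - (1/2 : ℂ) * ket ![0,0,1] b + ket ![1,1,1] b) ∧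
    -- (iv)
    (cobCogate ![mC, mF, mH] bridgeB =
      fun b => ket ![1,0,0] b + (Complex.I/4) * ket ![0,1,0] b
        - Complex.I * ket ![0,0,1] b + ket ![1,1,1] b) ∧
    -- consequently all four tensors are simultaneously Pfaffian
    IsPfaffGate ![mA, mB, mC, mD] cnot12 ∧
    IsPfaffGate ![mG, mH, mI, mJ] cnot1 ∧
    IsPfaffCogate ![mD, mE, mG] bridgeT ∧
    IsPfaffCogate ![mC, mF, mH] bridgeB := by
  refine ⟨cob_cnot12, cob_cnot1, cob_bridgeT, cob_bridgeB, ?_, ?_, ?_, ?_⟩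
  -- The entries of each skew-symmetric matrix are read off from the weight-two coordinates
  -- (for cogates, from the coordinates whose complement has weight two).
  · refine ⟨1, !![0, 0, -(1/4), 0; 0, 0, 0, 4; 1/4, 0, 0, 0; 0, -4, 0, 0], ?_, ?_⟩
    · intro i j
      fin_cases i <;> fin_cases j <;> simp
    · rw [cob_cnot12, sPf_four]
      funext b
      simp
      ring
  · refine ⟨1, !![0, 1, -2, Complex.I; -1, 0, -(1/2), -(Complex.I/4);
      2, 1/2, 0, Complex.I/2; -Complex.I, Complex.I/4, -(Complex.I/2), 0], ?_, ?_⟩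
    · intro i j
      fin_cases i <;> fin_cases j <;> simp
    · rw [cob_cnot1, sPf_four]
      funext b
      simp
      ring
  · refine ⟨1, !![0, -(1/2), 8; 1/2, 0, -(1/4); -8, 1/4, 0], ?_, ?_⟩
    · intro i j
      fin_cases i <;> fin_cases j <;> simp
    · rw [cob_bridgeT, sPfStar_three]
      funext b
      simp
      ring
  · refine ⟨1, !![0, -Complex.I, Complex.I/4; Complex.I, 0, 1; -(Complex.I/4), -1, 0], ?_, ?_⟩
    · intro i j
      fin_cases i <;> fin_cases j <;> simp
    · rw [cob_bridgeB, sPfStar_three]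
      funext b
      simp
      ring
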